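/- arXiv:1911.01251 — 8 statements merged into one kernel-verified Lean document; each statement's English description precedes it below -/
import Mathlib

section
/- Let n ≥ 2 be an integer and r ∈ [-1,1]. For every real symmetric positive semidefinite n×n matrix ρ satisfying ρ_{ii} = 1 for all i = 1,…,n and ρ_{1n} = r, the product of the superdiagonal entries satisfies ∏_{k=1}^{n-1} ρ_{k,k+1} ≤ (cos(θ_{r,n}))^{n-1}, where θ_{r,n} = arccos(r)/(n-1). -/
/-!
A correlation matrix is the Gram matrix of unit vectors `v₀, …, v_{n-1}`, so each superdiagonal
entry is the cosine of the angle between two consecutive vectors, and `r = cos ∠(v₀, v_{n-1})`.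

If the product of the superdiagonal entries is positive, flipping the signs of some interior vectors
makes every entry nonnegative without changing `r` or the product. The triangle inequality for
angles (`angle_le_sum_arccos_abs`) then bounds `arccos r` by the sum of the angles
`b_k = arccos |ρ_{k,k+1}| ∈ [0, π/2]`. AM-GM and the concavity of `cos` on `[0, π/2]`
(`prod_cos_le`) bound the product by `cos(mean of b_k)^(n-1)`, and `cos` is antitone there.

If the product is not positive, the right-hand side is nonnegative as soon as `n ≥ 3`, since then
`arccos r / (n-1) ≤ π/2`; for `n = 2` both sides equal `r`.
-/

open Real Finset

/-- If the product of the consecutive inner products of a chain of unit vectors is positive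
(negative), the angle from the first vector to the last one (to its negative) is at most the sum of
the acute angles between the lines spanned by consecutive vectors. The two signs are proved together
because a negative inner product exchanges them. -/
lemma angle_le_sum_arccos_abs {E : Type*} [NormedAddCommGroup E] [InnerProductSpace ℝ E]
    (u : ℕ → E) (hu : ∀ k, ‖u k‖ = 1) (m : ℕ) :
    (0 < ∏ k ∈ range m, inner ℝ (u k) (u (k + 1)) →
      InnerProductGeometry.angle (u 0) (u m)
        ≤ ∑ k ∈ range m, arccos |inner ℝ (u k) (u (k + 1))|) ∧
    (∏ k ∈ range m, inner ℝ (u k) (u (k + 1)) < 0 →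
      InnerProductGeometry.angle (u 0) (-u m)
        ≤ ∑ k ∈ range m, arccos |inner ℝ (u k) (u (k + 1))|) := by
  induction m with
  | zero =>
    have h0 : u 0 ≠ 0 := norm_ne_zero_iff.mp (by rw [hu]; exact one_ne_zero)
    simp [InnerProductGeometry.angle_self h0]
  | succ m ih =>
    obtain ⟨ihp, ihn⟩ := ih
    have hang : InnerProductGeometry.angle (u m) (u (m + 1))
        = arccos (inner ℝ (u m) (u (m + 1))) := by
      simp [InnerProductGeometry.angle, hu]
    have hang' : InnerProductGeometry.angle (u m) (-u (m + 1))
        = arccos (-inner ℝ (u m) (u (m + 1))) := by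
      simp [InnerProductGeometry.angle, hu]
    have t := InnerProductGeometry.angle_le_angle_add_angle (u 0)
    have hn1 := InnerProductGeometry.angle_neg_neg (u m) (u (m + 1))
    have hn2 := InnerProductGeometry.angle_neg_neg (u m) (-u (m + 1))
    rw [neg_neg] at hn2
    rw [prod_range_succ, sum_range_succ]
    constructor
    · intro h
      rcases mul_pos_iff.mp h with ⟨hP, hc⟩ | ⟨hP, hc⟩
      · rw [abs_of_pos hc]
        linarith [ihp hP, t (u m) (u (m + 1))]
      · rw [abs_of_neg hc]
        linarith [ihn hP, t (-u m) (u (m + 1))]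
    · intro h
      rcases mul_neg_iff.mp h with ⟨hP, hc⟩ | ⟨hP, hc⟩
      · rw [abs_of_neg hc]
        linarith [ihp hP, t (u m) (-u (m + 1))]
      · rw [abs_of_pos hc]
        linarith [ihn hP, t (-u m) (-u (m + 1))]

/-- The cosines of `N` angles in `[0, π/2]` have product at most the `N`-th power of the cosine of
the mean angle: AM-GM followed by Jensen's inequality. -/
lemma prod_cos_le (N : ℕ) (hN : 0 < N) (b : ℕ → ℝ) (hb0 : ∀ k, 0 ≤ b k)
    (hb1 : ∀ k, b k ≤ π / 2) :
    ∏ k ∈ range N, cos (b k) ≤ cos ((∑ k ∈ range N, b k) / N) ^ N := by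
  have hNr : (0 : ℝ) < N := by exact_mod_cast hN
  have hc : ∀ k, 0 ≤ cos (b k) := fun k =>
    cos_nonneg_of_neg_pi_div_two_le_of_le (by linarith [hb0 k, pi_pos]) (hb1 k)
  have hP : 0 ≤ ∏ k ∈ range N, cos (b k) := prod_nonneg fun k _ => hc k
  have amgm := geom_mean_le_arith_mean (range N) (fun _ => 1) (fun k => cos (b k))
    (fun _ _ => zero_le_one) (by simpa using hN) (fun k _ => hc k)
  have jensen := strictConcaveOn_cos_Icc.concaveOn.le_map_sum (t := range N)
    (w := fun _ => (N : ℝ)⁻¹) (p := b) (fun _ _ => by positivity)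
    (by simp [hNr.ne']) (fun k _ => ⟨by linarith [hb0 k, pi_pos], hb1 k⟩)
  simp only [rpow_one, sum_const, card_range, nsmul_eq_mul, mul_one, one_mul] at amgm
  simp only [smul_eq_mul, ← mul_sum] at jensen
  calc ∏ k ∈ range N, cos (b k)
      = ((∏ k ∈ range N, cos (b k)) ^ ((N : ℝ)⁻¹)) ^ N := (rpow_inv_natCast_pow hP hN.ne').symm
    _ ≤ cos ((∑ k ∈ range N, b k) / N) ^ N := by
      refine pow_le_pow_left₀ (rpow_nonneg hP _) (amgm.trans ?_) N
      rwa [div_eq_inv_mul, div_eq_inv_mul]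

/-- A positive semidefinite matrix is a Gram matrix: with `ρ = Bᴴ * B`, take the columns of `B`. -/
lemma exists_gram (n : ℕ) (ρ : Matrix (Fin n) (Fin n) ℝ) (h : ρ.PosSemidef) :
    ∃ v : Fin n → EuclideanSpace ℝ (Fin n), ∀ i j, ρ i j = inner ℝ (v i) (v j) := by
  open scoped MatrixOrder Matrix.Norms.L2Operator in
  obtain ⟨B, rfl⟩ := CStarAlgebra.nonneg_iff_eq_star_mul_self.mp h.nonneg
  refine ⟨fun i => WithLp.toLp 2 fun k => B k i, fun i j => ?_⟩
  simp [Matrix.mul_apply, PiLp.inner_apply, Matrix.star_apply, mul_comm]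

/-- For every symmetric PSD correlation matrix `ρ` (unit diagonal) with `ρ_{1n} = r`,
the product of the superdiagonal entries is at most `(cos (arccos r / (n-1)))^(n-1)`. -/
theorem stmt0 (n : ℕ) (hn : 2 ≤ n) (r : ℝ) (hr : r ∈ Set.Icc (-1 : ℝ) 1)
    (ρ : Matrix (Fin n) (Fin n) ℝ) (hsymm : ρ.IsSymm) (hpsd : ρ.PosSemidef)
    (hdiag : ∀ i, ρ i i = 1)
    (h1n : ρ ⟨0, by omega⟩ ⟨n - 1, by omega⟩ = r) :
    ∏ k : Fin (n - 1), ρ ⟨k.1, by have := k.2; omega⟩ ⟨k.1 + 1, by have := k.2; omega⟩ ≤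
      (Real.cos (Real.arccos r / ((n : ℝ) - 1))) ^ (n - 1) := by
  obtain ⟨v, hv⟩ := exists_gram n ρ hpsd
  -- Extended to all of `ℕ` by a constant, so that the chain can be handled by induction.
  let u : ℕ → EuclideanSpace ℝ (Fin n) := fun k =>
    if h : k < n then v ⟨k, h⟩ else v ⟨0, by omega⟩
  have hv1 : ∀ i, ‖v i‖ = 1 := fun i => by
    have := hv i i
    rw [hdiag, real_inner_self_eq_norm_sq] at this
    nlinarith [norm_nonneg (v i)]
  have hu : ∀ k, ‖u k‖ = 1 := fun k => by
    simp only [u]; split_ifs <;> exact hv1 _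
  have hprod : ∏ k : Fin (n - 1), ρ ⟨k.1, by have := k.2; omega⟩ ⟨k.1 + 1, by have := k.2; omega⟩
      = ∏ k ∈ range (n - 1), inner ℝ (u k) (u (k + 1)) := by
    rw [← Fin.prod_univ_eq_prod_range (fun k => (inner ℝ (u k) (u (k + 1)) : ℝ))]
    refine prod_congr rfl fun k _ => ?_
    have h1 : k.1 < n := by have := k.2; omega
    have h2 : k.1 + 1 < n := by have := k.2; omega
    simp only [u, dif_pos h1, dif_pos h2, hv]
  have hr' : InnerProductGeometry.angle (u 0) (u (n - 1)) = arccos r := by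
    have h1 : 0 < n := by omega
    have h2 : n - 1 < n := by omega
    rw [← h1n, hv]
    simp [InnerProductGeometry.angle, u, hv1, h1]
  have hcast : ((n - 1 : ℕ) : ℝ) = (n : ℝ) - 1 := by
    rw [Nat.cast_sub (by omega), Nat.cast_one]
  have hpos : (0 : ℝ) < (n : ℝ) - 1 := by
    rw [← hcast]; exact_mod_cast (by omega : 0 < n - 1)
  have hth0 : 0 ≤ arccos r / ((n : ℝ) - 1) := div_nonneg (arccos_nonneg r) hpos.le
  have hle1 : ∀ k, |(inner ℝ (u k) (u (k + 1)) : ℝ)| ≤ 1 := fun k => by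
    simpa [hu] using abs_real_inner_le_norm (u k) (u (k + 1))
  rcases le_or_gt (∏ k ∈ range (n - 1), (inner ℝ (u k) (u (k + 1)) : ℝ)) 0 with hneg | hP
  · rcases hn.eq_or_lt with rfl | h3
    · norm_num
      rw [cos_arccos hr.1 hr.2]
      exact h1n.le
    · rw [hprod]
      have h3' : (3 : ℝ) ≤ n := by exact_mod_cast h3
      have hle : arccos r / ((n : ℝ) - 1) ≤ π / 2 := by
        rw [div_le_iff₀ hpos]
        nlinarith [arccos_le_pi r, pi_pos]
      exact hneg.trans (pow_nonneg
        (cos_nonneg_of_neg_pi_div_two_le_of_le (by linarith [pi_pos]) hle) _)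
  · set b : ℕ → ℝ := fun k => arccos |(inner ℝ (u k) (u (k + 1)) : ℝ)| with hb
    have hb0 : ∀ k, 0 ≤ b k := fun k => arccos_nonneg _
    have hb1 : ∀ k, b k ≤ π / 2 := fun k => arccos_le_pi_div_two.mpr (abs_nonneg _)
    have hsum := (angle_le_sum_arccos_abs u hu (n - 1)).1 hP
    rw [hr'] at hsum
    have hmean : (∑ k ∈ range (n - 1), b k) / ((n : ℝ) - 1) ≤ π / 2 := by
      rw [div_le_iff₀ hpos, ← hcast]
      calc ∑ k ∈ range (n - 1), b k ≤ ∑ k ∈ range (n - 1), π / 2 := sum_le_sum fun k _ => hb1 k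
        _ = _ := by simp [mul_comm]
    have hth : arccos r / ((n : ℝ) - 1) ≤ (∑ k ∈ range (n - 1), b k) / ((n : ℝ) - 1) :=
      div_le_div_of_nonneg_right hsum hpos.le
    have hkey := prod_cos_le (n - 1) (by omega) b hb0 hb1
    rw [hcast] at hkey
    rw [hprod]
    calc ∏ k ∈ range (n - 1), (inner ℝ (u k) (u (k + 1)) : ℝ)
        = ∏ k ∈ range (n - 1), cos (b k) := by
          rw [← abs_of_pos hP, abs_prod]
          exact prod_congr rfl fun k _ =>
            (cos_arccos (by linarith [abs_nonneg (inner ℝ (u k) (u (k + 1)) : ℝ)]) (hle1 k)).symm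
      _ ≤ _ := hkey
      _ ≤ _ := by
          refine pow_le_pow_left₀ (cos_nonneg_of_neg_pi_div_two_le_of_le
            (by linarith [pi_pos]) hmean) ?_ _
          exact cos_le_cos_of_nonneg_of_le_pi hth0 (by linarith [pi_pos]) hth
end

section
/- Let n ≥ 2 be an integer, r ∈ [-1,1], and θ = arccos(r)/(n-1). The n×n real matrix M defined by M_{ij} = cos((j-i)θ) is symmetric positive semidefinite, has M_{ii} = 1 for all i, satisfies M_{1n} = r, and its superdiagonal product satisfies ∏_{k=1}^{n-1} M_{k,k+1} = (cos θ)^{n-1}. -/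
open Real Finset

/-! By the cosine difference formula, `M = A Aᵀ` where the `i`-th row of `A` is the unit vector
`(cos (i θ), sin (i θ))`. Hence `M` is a Gram matrix, so it is positive semidefinite. The entry
identities follow by evaluating the angle `(j - i) θ`: it is `0` on the diagonal, `θ` on the
superdiagonal, and `(n - 1) θ = arccos r` in the top right corner. -/

/-- The matrix `M i j = cos ((j - i) θ)` with `θ = arccos r / (n-1)` is a symmetric PSD
correlation matrix with `M_{1n} = r` whose superdiagonal product equals `(cos θ)^(n-1)`. -/
theorem stmt2 (n : ℕ) (hn : 2 ≤ n) (r : ℝ) (hr : r ∈ Set.Icc (-1 : ℝ) 1)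
    (θ : ℝ) (hθ : θ = Real.arccos r / ((n : ℝ) - 1))
    (M : Matrix (Fin n) (Fin n) ℝ)
    (hM : ∀ i j : Fin n, M i j = Real.cos (((j : ℝ) - (i : ℝ)) * θ)) :
    M.IsSymm ∧ M.PosSemidef ∧ (∀ i, M i i = 1) ∧
      M ⟨0, by omega⟩ ⟨n - 1, by omega⟩ = r ∧
      ∏ k : Fin (n - 1), M ⟨k.1, by have := k.2; omega⟩ ⟨k.1 + 1, by have := k.2; omega⟩ =
        (Real.cos θ) ^ (n - 1) := by
  have hgram : M = (Matrix.of fun (i : Fin n) (k : Fin 2) =>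
      ![Real.cos (i * θ), Real.sin (i * θ)] k) *
      (Matrix.of fun (i : Fin n) (k : Fin 2) =>
        ![Real.cos (i * θ), Real.sin (i * θ)] k).conjTranspose := by
    ext i j
    rw [hM, sub_mul, Real.cos_sub]
    simp [Matrix.mul_apply, Fin.sum_univ_two]
    ring
  have hpsd : M.PosSemidef := by
    rw [hgram]
    exact Matrix.posSemidef_self_mul_conjTranspose _
  refine ⟨?_, hpsd, ?_, ?_, ?_⟩
  · ext i j
    rw [Matrix.transpose_apply, hM, hM, ← Real.cos_neg]
    ring_nf
  · intro i
    simp [hM]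
  · have hn1 : (n : ℝ) - 1 ≠ 0 := by
      have : (2 : ℝ) ≤ n := by exact_mod_cast hn
      linarith
    rw [hM, hθ]
    simp only [Nat.cast_sub (show 1 ≤ n by omega), Nat.cast_zero, Nat.cast_one, sub_zero]
    rw [mul_div_cancel₀ _ hn1, Real.cos_arccos hr.1 hr.2]
  · simp [hM]
end

section
/- Let n ≥ 2 be an integer, r ∈ [-1,1], and θ = arccos(r)/(n-1). Let s_1 and s_2 be independent standard Gaussian random variables (mean 0, variance 1), and for k = 1,…,n define X_k = s_1·cos((k-1)θ) + s_2·sin((k-1)θ). Then each X_k is a standard Gaussian random variable (mean 0, variance 1), and for all i, j one has E[X_i X_j] = cos((j-i)θ); in particular E[X_1 X_n] = r and E[X_k X_{k+1}] = cos θ for each k = 1,…,n-1. -/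
/-!
The vectors `(cos kθ, sin kθ)` are unit vectors, and a combination `a s₁ + b s₂` of independent
standard Gaussians is Gaussian with mean `0` and variance `a² + b²`; this gives the laws of the
`X k`. Since `E[s₁²] = E[s₂²] = 1` and `E[s₁ s₂] = 0`, the pairing `E[X Y]` of two combinations is
the Euclidean inner product of their coefficient vectors, so
`E[X i X j] = cos iθ cos jθ + sin iθ sin jθ = cos ((j - i)θ)`. The first and last vectors are at
angle `(n - 1)θ = arccos r`.
-/

open Real MeasureTheory ProbabilityTheory

section Helpers

variable {Ω : Type*} [MeasurableSpace Ω] {μ : Measure Ω} {s s₁ s₂ : Ω → ℝ}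

lemma stdGaussian_memLp_two (hs : HasLaw s (gaussianReal 0 1) μ) : MemLp s 2 μ := by
  have h : MemLp id 2 (μ.map s) := by
    rw [hs.map_eq]; exact memLp_id_gaussianReal' 2 (by simp)
  exact h.comp_of_map hs.aemeasurable

lemma stdGaussian_integral (hs : HasLaw s (gaussianReal 0 1) μ) : ∫ ω, s ω ∂μ = 0 := by
  rw [hs.integral_eq, integral_id_gaussianReal]

lemma stdGaussian_integral_sq (hs : HasLaw s (gaussianReal 0 1) μ) : ∫ ω, s ω ^ 2 ∂μ = 1 := by
  rw [← variance_of_integral_eq_zero hs.aemeasurable (stdGaussian_integral hs), hs.variance_eq,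
    variance_id_gaussianReal, NNReal.coe_one]

/-- A unit-vector combination of two independent standard Gaussians is standard Gaussian. -/
lemma map_comb_eq_gaussian (h₁ : HasLaw s₁ (gaussianReal 0 1) μ)
    (h₂ : HasLaw s₂ (gaussianReal 0 1) μ) (hindep : IndepFun s₁ s₂ μ) {a b : ℝ}
    (hab : a ^ 2 + b ^ 2 = 1) :
    μ.map (fun ω ↦ s₁ ω * a + s₂ ω * b) = gaussianReal 0 1 := by
  have hi : IndepFun (fun ω ↦ s₁ ω * a) (fun ω ↦ s₂ ω * b) μ :=
    hindep.comp (measurable_id.mul_const a) (measurable_id.mul_const b)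
  have h := gaussianReal_add_gaussianReal_of_indepFun hi
    (gaussianReal_mul_const h₁ a).map_eq (gaussianReal_mul_const h₂ b).map_eq
  refine h.trans ?_
  rw [gaussianReal_ext_iff]
  refine ⟨by simp, NNReal.eq ?_⟩
  simpa using hab

/-- The pairing `E[X Y]` of two combinations of `s₁, s₂` is the inner product of their
coefficient vectors. -/
lemma integral_comb_mul_comb (h₁ : HasLaw s₁ (gaussianReal 0 1) μ)
    (h₂ : HasLaw s₂ (gaussianReal 0 1) μ) (hindep : IndepFun s₁ s₂ μ) (a b c d : ℝ) :
    ∫ ω, (s₁ ω * a + s₂ ω * b) * (s₁ ω * c + s₂ ω * d) ∂μ = a * c + b * d := by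
  have m₁ := stdGaussian_memLp_two h₁
  have m₂ := stdGaussian_memLp_two h₂
  have hcross : ∫ ω, s₁ ω * s₂ ω ∂μ = 0 := by
    rw [hindep.integral_fun_mul_eq_mul_integral m₁.1 m₂.1, stdGaussian_integral h₁, zero_mul]
  have i₁ : Integrable (fun ω ↦ (a * c) * s₁ ω ^ 2) μ := m₁.integrable_sq.const_mul _
  have i₂ : Integrable (fun ω ↦ (b * d) * s₂ ω ^ 2) μ := m₂.integrable_sq.const_mul _
  have i₃ : Integrable (fun ω ↦ (a * d + b * c) * (s₁ ω * s₂ ω)) μ :=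
    (m₁.integrable_mul m₂).const_mul _
  calc ∫ ω, (s₁ ω * a + s₂ ω * b) * (s₁ ω * c + s₂ ω * d) ∂μ
      = ∫ ω, ((a * c) * s₁ ω ^ 2 + (b * d) * s₂ ω ^ 2)
          + (a * d + b * c) * (s₁ ω * s₂ ω) ∂μ := by
        congr 1; ext ω; ring
    _ = a * c + b * d := by
        rw [integral_add (i₁.fun_add i₂) i₃, integral_add i₁ i₂, integral_const_mul,
          integral_const_mul, integral_const_mul, hcross, stdGaussian_integral_sq h₁,
          stdGaussian_integral_sq h₂]
        ring

end Helpers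

/-- With `s₁, s₂` independent standard Gaussians and
`X k = s₁ cos ((k-1)θ) + s₂ sin ((k-1)θ)` (0-based: `X k = s₁ cos (k θ) + s₂ sin (k θ)`),
each `X k` is standard Gaussian, `E[X i X j] = cos ((j-i)θ)`, in particular
`E[X 1 X n] = r` and `E[X k X (k+1)] = cos θ`. -/
theorem stmt3 (n : ℕ) (hn : 2 ≤ n) (r : ℝ) (hr : r ∈ Set.Icc (-1 : ℝ) 1)
    (θ : ℝ) (hθ : θ = Real.arccos r / ((n : ℝ) - 1))
    {Ω : Type*} [MeasurableSpace Ω] (μ : Measure Ω) [IsProbabilityMeasure μ]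
    (s₁ s₂ : Ω → ℝ) (hs₁ : Measurable s₁) (hs₂ : Measurable s₂)
    (hindep : IndepFun s₁ s₂ μ)
    (hlaw₁ : μ.map s₁ = gaussianReal 0 1) (hlaw₂ : μ.map s₂ = gaussianReal 0 1)
    (X : Fin n → Ω → ℝ)
    (hX : ∀ (k : Fin n) (ω : Ω),
      X k ω = s₁ ω * Real.cos ((k : ℝ) * θ) + s₂ ω * Real.sin ((k : ℝ) * θ)) :
    (∀ k : Fin n, μ.map (X k) = gaussianReal 0 1) ∧
    (∀ i j : Fin n, ∫ ω, X i ω * X j ω ∂μ = Real.cos (((j : ℝ) - (i : ℝ)) * θ)) ∧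
    (∫ ω, X ⟨0, by omega⟩ ω * X ⟨n - 1, by omega⟩ ω ∂μ = r) ∧
    (∀ k : Fin (n - 1),
      ∫ ω, X ⟨k.1, by have := k.2; omega⟩ ω * X ⟨k.1 + 1, by have := k.2; omega⟩ ω ∂μ =
        Real.cos θ) := by
  have h₁ : HasLaw s₁ (gaussianReal 0 1) μ := ⟨hs₁.aemeasurable, hlaw₁⟩
  have h₂ : HasLaw s₂ (gaussianReal 0 1) μ := ⟨hs₂.aemeasurable, hlaw₂⟩
  have hcov : ∀ i j : Fin n,
      ∫ ω, X i ω * X j ω ∂μ = Real.cos (((j : ℝ) - (i : ℝ)) * θ) := by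
    intro i j
    simp only [hX]
    rw [integral_comb_mul_comb h₁ h₂ hindep, sub_mul, Real.cos_sub]
    ring
  refine ⟨fun k ↦ ?_, hcov, ?_, fun k ↦ ?_⟩
  · rw [funext (hX k)]
    exact map_comb_eq_gaussian h₁ h₂ hindep (Real.cos_sq_add_sin_sq _)
  · have hn' : (n : ℝ) - 1 ≠ 0 := by
      have : (2 : ℝ) ≤ n := by exact_mod_cast hn
      linarith
    rw [hcov, hθ]
    push_cast [Nat.cast_sub (show 1 ≤ n by omega)]
    rw [sub_zero, mul_div_cancel₀ _ hn', Real.cos_arccos hr.1 hr.2]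
  · rw [hcov]
    congr 1
    push_cast
    ring
end

section
/- Let θ ∈ (0, π]. For every integer m ≥ 1, (cos(θ/m))^m < (cos(θ/(m+1)))^{m+1}. -/
/-!
For `m = 1` the claim is `cos θ < (1 + cos θ) / 2`. For `m ≥ 2` put `a = cos (θ / m)`, which is
nonnegative because `θ / m ≤ π / 2`. As `θ / (m + 1)` is the average of `m` copies of `θ / m` and
one copy of `0`, strict concavity of `cos` on `[-π / 2, π / 2]` gives
`(m * a + 1) / (m + 1) < cos (θ / (m + 1))`, and the AM-GM inequality for `m` copies of `a` and
one copy of `1` bounds `a ^ m` by the `(m + 1)`-st power of the left-hand side.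
-/

/-- AM-GM for `m` copies of `a` and one copy of `1`. -/
theorem pow_le_mean_with_one_pow {a : ℝ} (ha : 0 ≤ a) {m : ℕ} (hm : 1 ≤ m) :
    a ^ m ≤ (((m : ℝ) * a + 1) / ((m : ℝ) + 1)) ^ (m + 1) := by
  rcases ha.eq_or_lt with rfl | ha
  · rw [zero_pow (by omega)]
    positivity
  -- Bernoulli's inequality for `1 + t`, where `a * (1 + t)` is the mean.
  set t : ℝ := (1 - a) / (((m : ℝ) + 1) * a) with ht
  have hs : ((m : ℝ) * a + 1) / ((m : ℝ) + 1) = a * (1 + t) := by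
    rw [ht]
    field_simp
    ring
  have h1 : 0 < 1 + t := by
    have : 0 < a * (1 + t) := hs ▸ by positivity
    exact pos_of_mul_pos_right this ha.le
  have hB := one_add_mul_le_pow (a := t) (by linarith) (m + 1)
  have hinv : 1 + ((m + 1 : ℕ) : ℝ) * t = a⁻¹ := by
    rw [ht]
    push_cast
    field_simp
    ring
  rw [hinv] at hB
  rw [hs, mul_pow]
  calc a ^ m = a ^ (m + 1) * a⁻¹ := by rw [pow_succ, mul_inv_cancel_right₀ ha.ne']
    _ ≤ _ := by gcongr

/-- For `θ ∈ (0, π]` and every integer `m ≥ 1`,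
`(cos (θ/m))^m < (cos (θ/(m+1)))^(m+1)`. -/
theorem stmt8 (θ : ℝ) (hθ : θ ∈ Set.Ioc (0 : ℝ) Real.pi) (m : ℕ) (hm : 1 ≤ m) :
    (Real.cos (θ / (m : ℝ))) ^ m < (Real.cos (θ / ((m : ℝ) + 1))) ^ (m + 1) := by
  obtain ⟨h0, hpi⟩ := hθ
  rcases hm.eq_or_lt with rfl | hm2
  · have hlt : Real.cos θ < 1 := by
      simpa using Real.cos_lt_cos_of_nonneg_of_le_pi le_rfl hpi h0
    have hsq := Real.cos_sq (θ / 2)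
    rw [show 2 * (θ / 2) = θ by ring] at hsq
    norm_num
    rw [hsq]
    linarith
  · have hmr : (2 : ℝ) ≤ m := by exact_mod_cast hm2
    have hx0 : 0 < θ / m := by positivity
    have hx : θ / m ≤ Real.pi / 2 := by
      have := Real.pi_pos
      gcongr
    have ha : 0 ≤ Real.cos (θ / m) :=
      Real.cos_nonneg_of_neg_pi_div_two_le_of_le (by linarith) hx
    have hw : (m : ℝ) / (m + 1) + 1 / ((m : ℝ) + 1) = 1 := by field_simp
    have hmem : θ / m ∈ Set.Icc (-(Real.pi / 2)) (Real.pi / 2) := ⟨by linarith, hx⟩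
    have hmem0 : (0 : ℝ) ∈ Set.Icc (-(Real.pi / 2)) (Real.pi / 2) :=
      ⟨by linarith, by linarith⟩
    have hc := strictConcaveOn_cos_Icc.2 hmem hmem0 hx0.ne' (by positivity) (by positivity) hw
    simp only [smul_eq_mul, mul_zero, add_zero, Real.cos_zero, mul_one] at hc
    rw [show (m : ℝ) / (m + 1) * (θ / m) = θ / (m + 1) by field_simp,
      show (m : ℝ) / (m + 1) * Real.cos (θ / m) + 1 / ((m : ℝ) + 1)
        = (m * Real.cos (θ / m) + 1) / (m + 1) by ring] at hc
    exact (pow_le_mean_with_one_pow ha hm).trans_lt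
      (pow_lt_pow_left₀ hc (by positivity) (by omega))
end

section
/- For every real number t, -t/√(1 + 2t²) < 1/√2, and -t/√(1 + 2t²) tends to 1/√2 as t → -∞; hence the supremum of the function t ↦ -t/√(1 + 2t²) over ℝ equals 1/√2 and is not attained. -/
/-! The strict bound follows by clearing denominators: `(-t√2)² = 2t² < 1 + 2t²`. For `t < 0`,
dividing through by `-t` rewrites the function as `1/√((t⁻¹)² + 2)`, which is continuous in `t⁻¹`
and so tends to `1/√2`. An upper bound that is a limit of values is the least upper bound, and
strictness of the bound rules out attainment. -/

theorem false_corr_lt (t : ℝ) : -t / Real.sqrt (1 + 2 * t ^ 2) < 1 / Real.sqrt 2 := by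
  rw [div_lt_div_iff₀ (by positivity) (by positivity), one_mul]
  apply Real.lt_sqrt_of_sq_lt
  rw [mul_pow, Real.sq_sqrt (by norm_num)]
  linarith [neg_sq t]

theorem false_corr_tendsto :
    Filter.Tendsto (fun t : ℝ => -t / Real.sqrt (1 + 2 * t ^ 2)) Filter.atBot
      (nhds (1 / Real.sqrt 2)) := by
  have hc : ContinuousAt (fun s : ℝ => 1 / Real.sqrt (s ^ 2 + 2)) 0 := by
    apply ContinuousAt.div (by fun_prop) (by fun_prop)
    positivity
  have h := hc.tendsto.comp (tendsto_inv_atBot_zero (𝕜 := ℝ))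
  norm_num only [zero_add] at h
  refine Filter.Tendsto.congr' ?_ (by simpa using h)
  filter_upwards [Filter.eventually_lt_atBot (0 : ℝ)] with t ht
  have e : 1 + 2 * t ^ 2 = (-t) ^ 2 * (t⁻¹ ^ 2 + 2) := by
    have := ht.ne
    field_simp
  have hs : Real.sqrt (1 + 2 * t ^ 2) = -t * Real.sqrt (t⁻¹ ^ 2 + 2) := by
    rw [e, Real.sqrt_mul (sq_nonneg _), Real.sqrt_sq (by linarith)]
  have hp : 0 < Real.sqrt (t⁻¹ ^ 2 + 2) := by positivity
  have := ht.ne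
  rw [hs]
  simp only [Function.comp]
  field_simp

/-- For every real `t`, `-t/√(1+2t²) < 1/√2`; the function tends to `1/√2` as `t → -∞`;
hence its supremum over `ℝ` equals `1/√2` and is not attained. -/
theorem stmt10 :
    (∀ t : ℝ, -t / Real.sqrt (1 + 2 * t ^ 2) < 1 / Real.sqrt 2) ∧
    Filter.Tendsto (fun t : ℝ => -t / Real.sqrt (1 + 2 * t ^ 2)) Filter.atBot
      (nhds (1 / Real.sqrt 2)) ∧
    sSup (Set.range fun t : ℝ => -t / Real.sqrt (1 + 2 * t ^ 2)) = 1 / Real.sqrt 2 ∧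
    ∀ t : ℝ, -t / Real.sqrt (1 + 2 * t ^ 2) ≠ 1 / Real.sqrt 2 := by
  refine ⟨false_corr_lt, false_corr_tendsto, ?_, fun t => (false_corr_lt t).ne⟩
  refine IsLUB.csSup_eq ⟨?_, fun b hb => ?_⟩ (Set.range_nonempty _)
  · rintro _ ⟨t, rfl⟩
    exact (false_corr_lt t).le
  · exact le_of_tendsto' false_corr_tendsto fun t => hb ⟨t, rfl⟩
end

section
/- Let n ≥ 2, let r ∈ [-1, 1], and let X_1, …, X_n be random variables on a probability space, each taking values in {-1, 1}, with P(X_k = 1) = 1/2 for every k, and with E[X_1 X_n] = r. Then ∏_{k=1}^{n-1} E[X_k X_{k+1}] ≤ (1 - (1 - r)/(n - 1))^{n-1}. -/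
/-!
Write `ρ k = E[X k * X (k+1)]`, `m = n - 1`. For `m = 1` both sides equal `r`, so let `m ≥ 2`;
the base `1 - (1 - r) / m` is then nonnegative.

If `t k ∈ {-1, 1}`, then `1 - ∏ t k ≤ ∑ (1 - t k)`, since a product equal to `-1` has a factor `-1`
(`one_sub_prod_le`). Choose signs `s k` with `s k * ρ k = |ρ k|` and apply this to
`t k = s k * X k * X (k+1)`, whose product telescopes to `(∏ s k) * X 0 * X m`. Taking expectations,
`∑ (1 - |ρ k|) ≥ 1 - (∏ s k) * r` (`sum_signed_corr_le`).

When `∏ s k = 1`, this bounds the mean of the `|ρ k|` by `1 - (1 - r) / m`, and AM-GM bounds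
`∏ ρ k = ∏ |ρ k|`. When `∏ s k = -1`, the product `∏ ρ k` is nonpositive.
-/

open MeasureTheory

lemma prod_eq_one_or_neg_one (t : ℕ → ℝ) (ht : ∀ k, t k = 1 ∨ t k = -1) (m : ℕ) :
    ∏ k ∈ Finset.range m, t k = 1 ∨ ∏ k ∈ Finset.range m, t k = -1 := by
  induction m with
  | zero => simp
  | succ m ih =>
    rw [Finset.prod_range_succ]
    rcases ih with h | h <;> rcases ht m with h' | h' <;> simp [h, h']

lemma one_sub_prod_le (t : ℕ → ℝ) (ht : ∀ k, t k = 1 ∨ t k = -1) (m : ℕ) :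
    1 - ∏ k ∈ Finset.range m, t k ≤ ∑ k ∈ Finset.range m, (1 - t k) := by
  induction m with
  | zero => simp
  | succ m ih =>
    rw [Finset.prod_range_succ, Finset.sum_range_succ]
    rcases prod_eq_one_or_neg_one t ht m with h | h <;> rcases ht m with h' | h' <;>
      rw [h] at ih ⊢ <;> rw [h'] <;> linarith

lemma prod_adjacent (x s : ℕ → ℝ) (hx : ∀ k, x k = 1 ∨ x k = -1) (m : ℕ) :
    ∏ k ∈ Finset.range m, (s k * (x k * x (k + 1))) =
      (∏ k ∈ Finset.range m, s k) * (x 0 * x m) := by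
  induction m with
  | zero => rcases hx 0 with h | h <;> simp [h]
  | succ m ih =>
    rw [Finset.prod_range_succ, Finset.prod_range_succ, ih]
    have h : x m * x m = 1 := by rcases hx m with h | h <;> simp [h]
    linear_combination (∏ k ∈ Finset.range m, s k) * x 0 * s m * x (m + 1) * h

lemma integrable_mul_of_sign {Ω : Type*} [MeasurableSpace Ω] (μ : Measure Ω)
    [IsProbabilityMeasure μ] (Y Z : Ω → ℝ) (hY : Measurable Y) (hZ : Measurable Z)
    (hYv : ∀ ω, Y ω = 1 ∨ Y ω = -1) (hZv : ∀ ω, Z ω = 1 ∨ Z ω = -1) :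
    Integrable (fun ω => Y ω * Z ω) μ := by
  refine Integrable.of_bound (hY.mul hZ).aestronglyMeasurable 1 (Filter.Eventually.of_forall ?_)
  intro ω
  rcases hYv ω with h | h <;> rcases hZv ω with h' | h' <;> simp [h, h']

/-- The triangle inequality for the distance `1 - E[X Y]` between sign variables, after flipping
the signs of some of the variables along the chain. -/
lemma sum_signed_corr_le {Ω : Type*} [MeasurableSpace Ω] (μ : Measure Ω)
    [IsProbabilityMeasure μ] (Y : ℕ → Ω → ℝ) (hY : ∀ k, Measurable (Y k))
    (hv : ∀ k ω, Y k ω = 1 ∨ Y k ω = -1) (s : ℕ → ℝ) (hs : ∀ k, s k = 1 ∨ s k = -1) (m : ℕ) :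
    1 - (∏ k ∈ Finset.range m, s k) * ∫ ω, Y 0 ω * Y m ω ∂μ ≤
      ∑ k ∈ Finset.range m, (1 - s k * ∫ ω, Y k ω * Y (k + 1) ω ∂μ) := by
  have hint : ∀ i j, Integrable (fun ω => Y i ω * Y j ω) μ := fun i j =>
    integrable_mul_of_sign μ _ _ (hY i) (hY j) (hv i) (hv j)
  have hL : ∀ (c : ℝ) (i j : ℕ), Integrable (fun ω => 1 - c * (Y i ω * Y j ω)) μ := fun c i j =>
    (integrable_const _).sub ((hint i j).const_mul c)
  have hE : ∀ (c : ℝ) (i j : ℕ),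
      ∫ ω, (1 - c * (Y i ω * Y j ω)) ∂μ = 1 - c * ∫ ω, Y i ω * Y j ω ∂μ := fun c i j => by
    rw [integral_sub (integrable_const _) ((hint i j).const_mul c), integral_const_mul]
    simp
  simp_rw [← hE]
  rw [← integral_finsetSum _ fun k _ => hL _ _ _]
  refine integral_mono (hL _ _ _) (integrable_finsetSum _ fun k _ => hL _ _ _) fun ω => ?_
  have h := one_sub_prod_le (fun k => s k * (Y k ω * Y (k + 1) ω)) (fun k => by
    rcases hs k with h | h <;> rcases hv k ω with h' | h' <;>
      rcases hv (k + 1) ω with h'' | h'' <;> simp [h, h', h'']) m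
  rwa [prod_adjacent (fun k => Y k ω) s (fun k => hv k ω)] at h

lemma prod_le_mean_pow (z : ℕ → ℝ) (hz : ∀ k, 0 ≤ z k) (m : ℕ) (hm : m ≠ 0) :
    ∏ k ∈ Finset.range m, z k ≤ ((∑ k ∈ Finset.range m, z k) / m) ^ m := by
  have h := Real.geom_mean_le_arith_mean (Finset.range m) (fun _ => 1) z (by simp)
    (by simpa using Nat.pos_of_ne_zero hm) (fun k _ => hz k)
  simp only [Real.rpow_one, Finset.sum_const, Finset.card_range, nsmul_eq_mul, mul_one,
    one_mul] at h
  have hp : 0 ≤ ∏ k ∈ Finset.range m, z k := Finset.prod_nonneg fun k _ => hz k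
  have h2 := pow_le_pow_left₀ (Real.rpow_nonneg hp _) h m
  rwa [Real.rpow_inv_natCast_pow hp hm] at h2

lemma prod_corr_le {Ω : Type*} [MeasurableSpace Ω] (μ : Measure Ω)
    [IsProbabilityMeasure μ] (Y : ℕ → Ω → ℝ) (hY : ∀ k, Measurable (Y k))
    (hv : ∀ k ω, Y k ω = 1 ∨ Y k ω = -1) (m : ℕ) (hm : 1 ≤ m) (r : ℝ) (hr : -1 ≤ r)
    (h : ∫ ω, Y 0 ω * Y m ω ∂μ = r) :
    ∏ k ∈ Finset.range m, ∫ ω, Y k ω * Y (k + 1) ω ∂μ ≤ (1 - (1 - r) / m) ^ m := by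
  obtain rfl | hm2 : m = 1 ∨ 2 ≤ m := by omega
  · simp [← h]
  have hm2' : (2 : ℝ) ≤ m := by exact_mod_cast hm2
  have hm0 : (0 : ℝ) < m := by linarith
  set ρ : ℕ → ℝ := fun k => ∫ ω, Y k ω * Y (k + 1) ω ∂μ with hρ
  let s : ℕ → ℝ := fun k => if ρ k < 0 then -1 else 1
  have hs : ∀ k, s k = 1 ∨ s k = -1 := fun k => by
    by_cases hk : ρ k < 0 <;> simp [s, hk]
  have hsρ : ∀ k, s k * ρ k = |ρ k| := fun k => by
    by_cases hk : ρ k < 0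
    · simp [s, hk, abs_of_neg hk]
    · simp [s, hk, abs_of_nonneg (not_lt.mp hk)]
  have habs : (∏ k ∈ Finset.range m, s k) * ∏ k ∈ Finset.range m, ρ k =
      ∏ k ∈ Finset.range m, |ρ k| := by
    rw [← Finset.prod_mul_distrib]
    exact Finset.prod_congr rfl fun k _ => hsρ k
  have hnn : 0 ≤ ∏ k ∈ Finset.range m, |ρ k| := Finset.prod_nonneg fun k _ => abs_nonneg _
  have hbase : 0 ≤ 1 - (1 - r) / m := by
    rw [sub_nonneg, div_le_one hm0]
    linarith
  rcases prod_eq_one_or_neg_one s hs m with hp | hp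
  · rw [hp, one_mul] at habs
    have hsum := sum_signed_corr_le μ Y hY hv s hs m
    rw [hp, h, one_mul] at hsum
    have hsum' : 1 - r ≤ m - ∑ k ∈ Finset.range m, |ρ k| := by
      refine hsum.trans_eq ?_
      rw [Finset.sum_congr rfl fun k _ => congrArg (1 - ·) (hsρ k)]
      simp
    rw [habs]
    refine (prod_le_mean_pow _ (fun k => abs_nonneg (ρ k)) m (by omega)).trans ?_
    refine pow_le_pow_left₀ (by positivity) ?_ m
    rw [one_sub_div hm0.ne']
    gcongr
    linarith
  · rw [hp] at habs
    have := pow_nonneg hbase m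
    linarith

/-- For random variables `X 1, …, X n` valued in `{-1, 1}` with uniform marginals and
endpoint correlation `E[X 1 X n] = r`, the product of adjacent correlations satisfies
`∏_{k=1}^{n-1} E[X k X (k+1)] ≤ (1 - (1-r)/(n-1))^(n-1)`. -/
theorem stmt14 {Ω : Type*} [MeasurableSpace Ω] (μ : Measure Ω) [IsProbabilityMeasure μ]
    (n : ℕ) (hn : 2 ≤ n) (r : ℝ) (hr : r ∈ Set.Icc (-1 : ℝ) 1)
    (X : Fin n → Ω → ℝ)
    (hmeas : ∀ k, Measurable (X k))
    (hval : ∀ (k : Fin n) (ω : Ω), X k ω = 1 ∨ X k ω = -1)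
    (hunif : ∀ k : Fin n, μ {ω | X k ω = 1} = 1 / 2)
    (h1n : ∫ ω, X ⟨0, by omega⟩ ω * X ⟨n - 1, by omega⟩ ω ∂μ = r) :
    ∏ k : Fin (n - 1),
        ∫ ω, X ⟨k.1, by have := k.2; omega⟩ ω * X ⟨k.1 + 1, by have := k.2; omega⟩ ω ∂μ ≤
      (1 - (1 - r) / ((n : ℝ) - 1)) ^ (n - 1) := by
  -- Extend the chain to all of `ℕ` by repeating its last variable.
  let Y : ℕ → Ω → ℝ := fun k => X ⟨min k (n - 1), by omega⟩
  have hY : ∀ (k : ℕ) (hk : k < n), Y k = X ⟨k, hk⟩ := fun k hk => by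
    have : min k (n - 1) = k := by omega
    simp only [Y, this]
  have key := prod_corr_le μ Y (fun k => hmeas _) (fun k => hval _) (n - 1) (by omega) r hr.1
    (by rw [hY 0 (by omega), hY (n - 1) (by omega)]; exact h1n)
  rw [← Fin.prod_univ_eq_prod_range (fun k => ∫ ω, Y k ω * Y (k + 1) ω ∂μ),
    Nat.cast_sub (by omega), Nat.cast_one] at key
  refine le_of_eq_of_le (Finset.prod_congr rfl fun k _ => ?_) key
  have := k.2
  rw [hY k (by omega), hY (k + 1) (by omega)]
end

section
/- Let m ≥ 1 be an integer and let r, ρ be real numbers with -1 ≤ r ≤ ρ ≤ 1 and ρ ≥ 0. Then ρ·(1 - (ρ - r)/m)^m ≤ (1 - (1 - r)/(m + 1))^{m+1}. -/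
/-!
The right-hand base `A = 1 - (1 - r)/(m+1)` is the mean of `ρ` and `m` copies of
`b = 1 - (ρ - r)/m`, so the claim is the AM-GM inequality `ρ * b ^ m ≤ A ^ (m + 1)`. For `m ≥ 2`
the bounds on `ρ` and `r` give `b ≥ 0`, and AM-GM is the homogeneous Bernoulli inequality
`A ^ (m + 1) ≥ b ^ (m + 1) + (m + 1) * b ^ m * (A - b) = ρ * b ^ m`. For `m = 1` the number `b`
may be negative, but the inequality is then just `4 * ρ * b ≤ (ρ + b) ^ 2`.
-/

/-- For `m ≥ 1` and `-1 ≤ r ≤ ρ ≤ 1` with `ρ ≥ 0`,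
`ρ·(1 - (ρ - r)/m)^m ≤ (1 - (1 - r)/(m+1))^(m+1)`. -/
theorem stmt15 (m : ℕ) (hm : 1 ≤ m) (r ρ : ℝ)
    (h1 : -1 ≤ r) (h2 : r ≤ ρ) (h3 : ρ ≤ 1) (h4 : 0 ≤ ρ) :
    ρ * (1 - (ρ - r) / (m : ℝ)) ^ m ≤ (1 - (1 - r) / ((m : ℝ) + 1)) ^ (m + 1) := by
  have hm0 : (0 : ℝ) < m := by exact_mod_cast hm
  rcases hm.eq_or_lt with rfl | hm2
  · norm_num
    nlinarith [sq_nonneg (ρ - (1 - (ρ - r)))]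
  · have hm2' : (2 : ℝ) ≤ m := by exact_mod_cast hm2
    set b := 1 - (ρ - r) / (m : ℝ) with hb
    set A := 1 - (1 - r) / ((m : ℝ) + 1) with hA
    have hb0 : 0 ≤ b := by
      rw [hb, sub_nonneg, div_le_one hm0]
      linarith
    have hA0 : 0 ≤ A := by
      rw [hA, sub_nonneg, div_le_one (by positivity)]
      linarith
    have hmean : ((m : ℝ) + 1) * (A - b) = ρ - b := by
      rw [hA, hb]
      field_simp
      ring
    have bern := pow_add_mul_le_add_pow (a := b) (b := A - b) hb0 (by linarith) (m + 1)
    rw [add_sub_cancel, Nat.add_sub_cancel] at bern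
    push_cast at bern
    calc ρ * b ^ m = b ^ (m + 1) + ((m : ℝ) + 1) * b ^ m * (A - b) := by
          rw [pow_succ]
          linear_combination (-b ^ m) * hmean
      _ ≤ A ^ (m + 1) := bern
end

section
/- Let n ≥ 2 be an integer and r ∈ [-1, 1]. There exist a probability space and random variables X_1, …, X_n on it, each taking values in {-1, 1}, such that P(X_k = 1) = 1/2 for every k, E[X_1 X_n] = r, and E[X_k X_{k+1}] = 1 - (1 - r)/(n - 1) for every k = 1, …, n-1. In particular, ∏_{k=1}^{n-1} E[X_k X_{k+1}] = (1 - (1 - r)/(n - 1))^{n-1}. -/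
open MeasureTheory

/-!
The sign of `⟨w, z⟩` for a rotation-invariant `z` in the plane depends only on the angle of `z`, so
the Gaussian is replaced by a uniform point on a circle, parametrized as `(0, 2]` with half the
Lebesgue measure. A half-plane becomes a half-circle `(t, t + 1]` with `t ∈ [0, 1]`, and the
corresponding sign variable takes the value `1` there and `-1` elsewhere. Two such variables with
parameters `s ≤ t` differ exactly on `(s, t] ∪ (s + 1, t + 1]`, of probability `t - s`, so their
correlation is `1 - 2 (t - s)` (`integral_arcSign_mul`). The theorem follows by spacing the
parameters equally between `0` and `(1 - r) / 2`.
-/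

/-- The uniform probability measure on the circle of length `2`, parametrized by `(0, 2]`. -/
noncomputable def circleMeasure : Measure ℝ :=
  (1 / 2 : ENNReal) • (volume : Measure ℝ).restrict (Set.Ioc 0 2)

/-- The sign variable of the half-circle `(t, t + 1]`; it represents a half-plane when
`t ∈ [0, 1]`. -/
noncomputable def arcSign (t : ℝ) : ℝ → ℝ :=
  fun u => if u ∈ Set.Ioc t (t + 1) then 1 else -1

lemma isProbabilityMeasure_circleMeasure : IsProbabilityMeasure circleMeasure := by
  constructor
  simp [circleMeasure, ENNReal.inv_mul_cancel]

lemma circleMeasure_Ioc {a b : ℝ} (ha : 0 ≤ a) (hb : b ≤ 2) :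
    circleMeasure (Set.Ioc a b) = 1 / 2 * ENNReal.ofReal (b - a) := by
  rw [circleMeasure, Measure.smul_apply, Measure.restrict_apply measurableSet_Ioc,
    Set.inter_eq_left.2 (Set.Ioc_subset_Ioc ha hb), Real.volume_Ioc, smul_eq_mul]

lemma circleMeasure_real_Ioc {a b : ℝ} (ha : 0 ≤ a) (hab : a ≤ b) (hb : b ≤ 2) :
    circleMeasure.real (Set.Ioc a b) = (b - a) / 2 := by
  rw [measureReal_def, circleMeasure_Ioc ha hb, ENNReal.toReal_mul,
    ENNReal.toReal_ofReal (sub_nonneg.2 hab)]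
  simp only [one_div, ENNReal.toReal_inv, ENNReal.toReal_ofNat]
  ring

lemma measurable_arcSign (t : ℝ) : Measurable (arcSign t) :=
  Measurable.ite measurableSet_Ioc measurable_const measurable_const

lemma arcSign_eq_or (t u : ℝ) : arcSign t u = 1 ∨ arcSign t u = -1 := by
  unfold arcSign
  split_ifs <;> simp

lemma setOf_arcSign_eq_one (t : ℝ) : {u | arcSign t u = 1} = Set.Ioc t (t + 1) := by
  ext u
  simp only [arcSign, Set.mem_ofPred_eq]
  split_ifs with h
  · simpa using h
  · exact ⟨fun h' => by norm_num at h', fun h' => absurd h' h⟩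

/-- Two half-circle signs disagree exactly on the two arcs between their endpoints; `t ≤ s + 1`
makes these arcs disjoint. -/
lemma arcSign_mul {s t : ℝ} (hst : s ≤ t) (hts : t ≤ s + 1) (u : ℝ) :
    arcSign s u * arcSign t u =
      1 - (2 * (Set.Ioc s t).indicator 1 u + 2 * (Set.Ioc (s + 1) (t + 1)).indicator 1 u) := by
  simp only [arcSign, Set.indicator_apply, Set.mem_Ioc, Pi.one_apply]
  split_ifs <;> grind

/-- The correlation of two half-circle signs is an affine function of the angle between them. -/
lemma integral_arcSign_mul {s t : ℝ} (hs : 0 ≤ s) (hst : s ≤ t) (ht : t ≤ 1) :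
    ∫ u, arcSign s u * arcSign t u ∂circleMeasure = 1 - 2 * (t - s) := by
  have := isProbabilityMeasure_circleMeasure
  have hi (a b : ℝ) : Integrable (fun u => 2 * (Set.Ioc a b).indicator (1 : ℝ → ℝ) u)
      circleMeasure :=
    ((integrable_const (1 : ℝ)).indicator measurableSet_Ioc).const_mul 2
  have hadd : Integrable (fun u => 2 * (Set.Ioc s t).indicator (1 : ℝ → ℝ) u +
      2 * (Set.Ioc (s + 1) (t + 1)).indicator (1 : ℝ → ℝ) u) circleMeasure :=
    (hi _ _).add (hi _ _)
  simp_rw [arcSign_mul hst (by linarith : t ≤ s + 1)]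
  rw [integral_sub (integrable_const 1) hadd, integral_add (hi _ _) (hi _ _),
    integral_const_mul, integral_const_mul, integral_indicator_one measurableSet_Ioc,
    integral_indicator_one measurableSet_Ioc, circleMeasure_real_Ioc hs hst (by linarith),
    circleMeasure_real_Ioc (by linarith) (by linarith) (by linarith)]
  simp only [integral_const, probReal_univ, smul_eq_mul]
  ring

/-- There exist `{-1,1}`-valued random variables `X 1, …, X n` with uniform marginals,
endpoint correlation `E[X 1 X n] = r`, and all adjacent correlations equal to
`1 - (1-r)/(n-1)`; in particular the product of adjacent correlations equals
`(1 - (1-r)/(n-1))^(n-1)`. -/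
theorem stmt17 (n : ℕ) (hn : 2 ≤ n) (r : ℝ) (hr : r ∈ Set.Icc (-1 : ℝ) 1) :
    ∃ (Ω : Type) (mΩ : MeasurableSpace Ω) (μ : Measure Ω) (X : Fin n → Ω → ℝ),
      IsProbabilityMeasure μ ∧
      (∀ k, Measurable (X k)) ∧
      (∀ (k : Fin n) (ω : Ω), X k ω = 1 ∨ X k ω = -1) ∧
      (∀ k : Fin n, μ {ω | X k ω = 1} = 1 / 2) ∧
      (∫ ω, X ⟨0, by omega⟩ ω * X ⟨n - 1, by omega⟩ ω ∂μ = r) ∧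
      (∀ k : Fin (n - 1),
        ∫ ω, X ⟨k.1, by have := k.2; omega⟩ ω * X ⟨k.1 + 1, by have := k.2; omega⟩ ω ∂μ =
          1 - (1 - r) / ((n : ℝ) - 1)) ∧
      (∏ k : Fin (n - 1),
        ∫ ω, X ⟨k.1, by have := k.2; omega⟩ ω * X ⟨k.1 + 1, by have := k.2; omega⟩ ω ∂μ =
          (1 - (1 - r) / ((n : ℝ) - 1)) ^ (n - 1)) := by
  have hn' : (0 : ℝ) < (n : ℝ) - 1 := by
    have : (2 : ℝ) ≤ n := by exact_mod_cast hn
    linarith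
  have hc : ((n - 1 : ℕ) : ℝ) = (n : ℝ) - 1 := by
    rw [Nat.cast_sub (by omega), Nat.cast_one]
  -- The spacing; the last parameter `(n - 1) * d = (1 - r) / 2` lies in `[0, 1]` as `r ∈ [-1, 1]`.
  obtain ⟨d, hd⟩ : ∃ d, d = (1 - r) / (2 * ((n : ℝ) - 1)) := ⟨_, rfl⟩
  have hd0 : 0 ≤ d := hd ▸ div_nonneg (by linarith [hr.2]) (by linarith)
  have hdn : ((n : ℝ) - 1) * d = (1 - r) / 2 := by
    rw [hd]
    field_simp
  have hk0 (k : ℕ) : 0 ≤ (k : ℝ) * d := by positivity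
  have hk1 (k : ℕ) (hk : k < n) : (k : ℝ) * d ≤ 1 := by
    have hk' : (k : ℝ) ≤ (n : ℝ) - 1 := by
      rw [← hc]
      exact_mod_cast Nat.le_sub_one_of_lt hk
    linarith [mul_le_mul_of_nonneg_right hk' hd0, hr.1]
  have hadj (k : Fin (n - 1)) :
      ∫ ω, arcSign ((k.1 : ℕ) * d) ω * arcSign ((k.1 + 1 : ℕ) * d) ω ∂circleMeasure =
        1 - (1 - r) / ((n : ℝ) - 1) := by
    have hlt := k.2
    rw [integral_arcSign_mul (hk0 _) (by push_cast; linarith) (hk1 _ (by omega)), hd]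
    push_cast
    field_simp
    ring
  refine ⟨ℝ, inferInstance, circleMeasure, fun k => arcSign (k.1 * d),
    isProbabilityMeasure_circleMeasure, fun k => measurable_arcSign _,
    fun k ω => arcSign_eq_or _ ω, fun k => ?_, ?_, hadj, ?_⟩
  · rw [setOf_arcSign_eq_one, circleMeasure_Ioc (hk0 _) (by linarith [hk1 _ k.2])]
    simp
  · simp only
    rw [integral_arcSign_mul (hk0 _) (mul_le_mul_of_nonneg_right (by simp) hd0)
      (hk1 _ (by omega)), hc, hdn]
    simp only [Nat.cast_zero]
    ring
  · rw [Finset.prod_congr rfl fun k _ => hadj k]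
    simp
end
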